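/- Let ρ be the density matrix (1/6)(I − Σ_{i=1}^{6}|φ_i⟩⟨φ_i|) on ℂ^3 ⊗ ℂ^4 from the paper's bound-entanglement construction, let U be the unitary [[1/2, √3/2, 0], [−√3/2, 1/2, 0], [0, 0, 1]] acting on the ℂ^3 factor, and let Λ be the Choi map on M_3(ℂ). Then the operator (Λ ⊗ id_{M_4})((U ⊗ I) ρ (U ⊗ I)*) is not positive semidefinite (its minimum eigenvalue is negative). Consequently ρ is not a separable state across the ℂ^3 | ℂ^4 cut. -/

import Mathlib

open scoped ComplexOrder Kronecker

noncomputable section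

def ket {n : ℕ} (k : Fin n) : Fin n → ℂ := fun j => if j = k then 1 else 0

def dif {n : ℕ} (a b : Fin n) : Fin n → ℂ :=
  fun j => if j = a then 1 else if j = b then -1 else 0

def tp (u : Fin 3 → ℂ) (v w : Fin 2 → ℂ) : Fin 3 × Fin 2 × Fin 2 → ℂ :=
  fun p => u p.1 * v p.2.1 * w p.2.2

/-- The six normalized vectors `|φ_1⟩, …, |φ_6⟩` in `ℂ^3 ⊗ ℂ^2 ⊗ ℂ^2`. -/
def phi (i : Fin 6) : Fin 3 × Fin 2 × Fin 2 → ℂ :=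
  match i with
  | 0 => (Real.sqrt 2 : ℂ)⁻¹ • tp (dif 0 1) (ket 0) (ket 0)
  | 1 => (Real.sqrt 2 : ℂ)⁻¹ • tp (dif 2 0) (ket 1) (ket 0)
  | 2 => (Real.sqrt 2 : ℂ)⁻¹ • tp (ket 1) (ket 1) (dif 0 1)
  | 3 => (Real.sqrt 2 : ℂ)⁻¹ • tp (dif 1 2) (ket 0) (ket 1)
  | 4 => (Real.sqrt 2 : ℂ)⁻¹ • tp (ket 0) (dif 0 1) (ket 1)
  | 5 => (Real.sqrt 12 : ℂ)⁻¹ • tp (fun _ => 1) (fun _ => 1) (fun _ => 1)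

def split4 (k : Fin 4) : Fin 2 × Fin 2 := (⟨k.val / 2, by omega⟩, ⟨k.val % 2, by omega⟩)

/-- `|φ_i⟩` viewed in `ℂ^3 ⊗ ℂ^4`. -/
def phi' (i : Fin 6) : Fin 3 × Fin 4 → ℂ := fun p => phi i (p.1, split4 p.2)

/-- The state `ρ = (1/6)(I − Σ_{i=1}^{6} |φ_i⟩⟨φ_i|)` on `ℂ^3 ⊗ ℂ^4`. -/
def rho : Matrix (Fin 3 × Fin 4) (Fin 3 × Fin 4) ℂ :=
  (6 : ℂ)⁻¹ • ((1 : Matrix (Fin 3 × Fin 4) (Fin 3 × Fin 4) ℂ)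
    - ∑ i : Fin 6, Matrix.vecMulVec (phi' i) (star (phi' i)))

/-- The unitary `U` of Eq. (8). -/
def U : Matrix (Fin 3) (Fin 3) ℂ :=
  !![1/2, (Real.sqrt 3 : ℂ)/2, 0;
     -(Real.sqrt 3 : ℂ)/2, 1/2, 0;
     0, 0, 1]

/-- The (normalized) Choi map `Λ : M_3(ℂ) → M_3(ℂ)` of Eq. (7). -/
def choiMap (A : Matrix (Fin 3) (Fin 3) ℂ) : Matrix (Fin 3) (Fin 3) ℂ :=
  (2 : ℂ)⁻¹ • !![A 0 0 + A 1 1, -A 0 1, -A 0 2;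
                 -A 1 0, A 1 1 + A 2 2, -A 1 2;
                 -A 2 0, -A 2 1, A 2 2 + A 0 0]

/-- The induced map `Λ ⊗ id_{M_4}` acting blockwise. -/
def lamTensorId (M : Matrix (Fin 3 × Fin 4) (Fin 3 × Fin 4) ℂ) :
    Matrix (Fin 3 × Fin 4) (Fin 3 × Fin 4) ℂ :=
  Matrix.of fun p q => choiMap (Matrix.of fun a b => M (a, p.2) (b, q.2)) p.1 q.1

/-- Separability of a state on `ℂ^3 ⊗ ℂ^4`: a convex combination of products of density
matrices. -/
def Separable (M : Matrix (Fin 3 × Fin 4) (Fin 3 × Fin 4) ℂ) : Prop :=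
  ∃ (N : ℕ) (w : Fin N → ℝ) (σ : Fin N → Matrix (Fin 3) (Fin 3) ℂ)
    (τ : Fin N → Matrix (Fin 4) (Fin 4) ℂ),
    (∀ i, 0 ≤ w i) ∧ (∑ i, w i = 1) ∧
    (∀ i, (σ i).PosSemidef ∧ (σ i).trace = 1) ∧
    (∀ i, (τ i).PosSemidef ∧ (τ i).trace = 1) ∧
    M = ∑ i, (w i : ℂ) • (σ i ⊗ₖ τ i)

/-! ### Positivity of the Choi map -/

lemma cyc_amgm (A B C : ℝ) (hA : 0 ≤ A) (hB : 0 ≤ B) (hC : 0 ≤ C) :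
    3 * (A * B * C) ≤ A ^ 2 * C + B ^ 2 * A + C ^ 2 * B := by
  rcases le_total A B with h1 | h1 <;> rcases le_total B C with h2 | h2 <;>
    rcases le_total A C with h3 | h3 <;>
    nlinarith [mul_nonneg hA (sq_nonneg (A - B)), mul_nonneg hA (sq_nonneg (B - C)),
      mul_nonneg hA (sq_nonneg (A - C)), mul_nonneg hB (sq_nonneg (A - B)),
      mul_nonneg hB (sq_nonneg (B - C)), mul_nonneg hB (sq_nonneg (A - C)),
      mul_nonneg hC (sq_nonneg (A - B)), mul_nonneg hC (sq_nonneg (B - C)),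
      mul_nonneg hC (sq_nonneg (A - C)),
      mul_nonneg hA (mul_nonneg (sub_nonneg.2 h1) (sub_nonneg.2 h2)),
      mul_nonneg hA (mul_nonneg (sub_nonneg.2 h1) (sub_nonneg.2 h3)),
      mul_nonneg hA (mul_nonneg (sub_nonneg.2 h2) (sub_nonneg.2 h3)),
      mul_nonneg hB (mul_nonneg (sub_nonneg.2 h1) (sub_nonneg.2 h2)),
      mul_nonneg hB (mul_nonneg (sub_nonneg.2 h1) (sub_nonneg.2 h3)),
      mul_nonneg hB (mul_nonneg (sub_nonneg.2 h2) (sub_nonneg.2 h3)),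
      mul_nonneg hC (mul_nonneg (sub_nonneg.2 h1) (sub_nonneg.2 h2)),
      mul_nonneg hC (mul_nonneg (sub_nonneg.2 h1) (sub_nonneg.2 h3)),
      mul_nonneg hC (mul_nonneg (sub_nonneg.2 h2) (sub_nonneg.2 h3))]

lemma half_bound (B C : ℝ) (hB : 0 ≤ B) (hC : 0 ≤ C) : B / (2 * B + C) ≤ 1 / 2 := by
  apply div_le_of_le_mul₀ <;> linarith

lemma frac_bound (A B C : ℝ) (hA : 0 ≤ A) (hB : 0 ≤ B) (hC : 0 ≤ C) :
    A / (2 * A + B) + B / (2 * B + C) + C / (2 * C + A) ≤ 1 := by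
  have e1 := half_bound A B hA hB
  have e2 := half_bound B C hB hC
  have e3 := half_bound C A hC hA
  rcases hA.eq_or_lt with rfl | hA'
  · simp only [zero_div] at *; linarith
  rcases hB.eq_or_lt with rfl | hB'
  · simp only [zero_div] at *; linarith
  rcases hC.eq_or_lt with rfl | hC'
  · simp only [zero_div] at *; linarith
  rw [div_add_div _ _ (by positivity) (by positivity), div_add_div _ _ (by positivity)
    (by positivity), div_le_one (by positivity)]
  nlinarith [cyc_amgm A B C hA hB hC]

lemma cs_term (a b D : ℝ) (h : 2 * a ^ 2 ≤ D) :
    (a * b) ^ 2 = (b ^ 2 * D) * (a ^ 2 / D) := by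
  by_cases hD : D = 0
  · have : a = 0 := by nlinarith [sq_nonneg a]
    simp [this]
  · field_simp

lemma choi_real (a b : Fin 3 → ℝ) :
    (a 0 * b 0 + a 1 * b 1 + a 2 * b 2) ^ 2 ≤
      b 0 ^ 2 * (2 * a 0 ^ 2 + a 1 ^ 2) + b 1 ^ 2 * (2 * a 1 ^ 2 + a 2 ^ 2)
        + b 2 ^ 2 * (2 * a 2 ^ 2 + a 0 ^ 2) := by
  have h := Finset.sum_sq_le_sum_mul_sum_of_sq_le_mul (Finset.univ : Finset (Fin 3))
    (r := fun i => a i * b i) (f := fun i => b i ^ 2 * (2 * a i ^ 2 + a (i + 1) ^ 2))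
    (g := fun i => a i ^ 2 / (2 * a i ^ 2 + a (i + 1) ^ 2))
    (fun i _ => by positivity) (fun i _ => by positivity)
    (fun i _ => (cs_term _ _ _ (by nlinarith [sq_nonneg (a (i + 1))])).le)
  have f := frac_bound (a 0 ^ 2) (a 1 ^ 2) (a 2 ^ 2) (by positivity) (by positivity)
    (by positivity)
  rw [Fin.sum_univ_three, Fin.sum_univ_three, Fin.sum_univ_three] at h
  have t0 : (0 : Fin 3) + 1 = 1 := rfl
  have t1 : (1 : Fin 3) + 1 = 2 := rfl
  have t2 : (2 : Fin 3) + 1 = 0 := rfl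
  simp only [t0, t1, t2] at h
  refine h.trans (mul_le_of_le_one_right (by positivity) f)

/-- The Choi map as a linear map. -/
def choiL : Matrix (Fin 3) (Fin 3) ℂ →ₗ[ℂ] Matrix (Fin 3) (Fin 3) ℂ where
  toFun := choiMap
  map_add' A B := by
    ext i j; fin_cases i <;> fin_cases j <;> simp [choiMap] <;> ring
  map_smul' c A := by
    ext i j; fin_cases i <;> fin_cases j <;> simp [choiMap] <;> ring

lemma choi_rank_one (x : Fin 3 → ℂ) : (choiMap (Matrix.vecMulVec x (star x))).PosSemidef := by
  refine Matrix.PosSemidef.of_dotProduct_mulVec_nonneg ?_ ?_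
  · ext i j
    fin_cases i <;> fin_cases j <;> simp [choiMap, Matrix.vecMulVec_apply, mul_comm]
  · intro y
    have key : star y ⬝ᵥ (choiMap (Matrix.vecMulVec x (star x))).mulVec y =
        ((2⁻¹ * ((‖y 0‖ ^ 2 * (2 * ‖x 0‖ ^ 2 + ‖x 1‖ ^ 2) + ‖y 1‖ ^ 2 * (2 * ‖x 1‖ ^ 2 + ‖x 2‖ ^ 2)
        + ‖y 2‖ ^ 2 * (2 * ‖x 2‖ ^ 2 + ‖x 0‖ ^ 2)) -
        ‖star (x 0) * y 0 + star (x 1) * y 1 + star (x 2) * y 2‖ ^ 2) : ℝ) : ℂ) := by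
      push_cast
      simp only [← Complex.conj_mul']
      simp [choiMap, Matrix.vecMulVec_apply, dotProduct, Matrix.mulVec, Fin.sum_univ_three]
      ring
    rw [key]
    have h := choi_real (fun i => ‖x i‖) (fun i => ‖y i‖)
    have h2 : ‖star (x 0) * y 0 + star (x 1) * y 1 + star (x 2) * y 2‖ ≤
        ‖x 0‖ * ‖y 0‖ + ‖x 1‖ * ‖y 1‖ + ‖x 2‖ * ‖y 2‖ := by
      refine (norm_add₃_le).trans ?_
      simp
    have h3 := pow_le_pow_left₀ (norm_nonneg _) h2 2
    simp only [Complex.zero_le_real]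
    have := h3.trans h
    linarith

lemma choi_pos (A : Matrix (Fin 3) (Fin 3) ℂ) (hA : A.PosSemidef) : (choiMap A).PosSemidef := by
  obtain ⟨B, rfl⟩ : ∃ B : Matrix (Fin 3) (Fin 3) ℂ, A = B.conjTranspose * B := by
    open scoped MatrixOrder in
    exact CStarAlgebra.nonneg_iff_eq_star_mul_self.1 hA.nonneg
  have : B.conjTranspose * B = ∑ k, Matrix.vecMulVec (star (B k)) (star (star (B k))) := by
    ext i j
    simp [Matrix.mul_apply, Matrix.sum_apply, Matrix.vecMulVec_apply]
  rw [this]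
  change (choiL _).PosSemidef
  rw [map_sum]
  exact Matrix.posSemidef_sum _ fun k _ => choi_rank_one _

lemma lam_add (A B : Matrix (Fin 3 × Fin 4) (Fin 3 × Fin 4) ℂ) :
    lamTensorId (A + B) = lamTensorId A + lamTensorId B := by
  ext ⟨i, k⟩ ⟨j, l⟩
  fin_cases i <;> fin_cases j <;> simp [lamTensorId, choiMap] <;> ring

lemma lam_smul (c : ℂ) (A : Matrix (Fin 3 × Fin 4) (Fin 3 × Fin 4) ℂ) :
    lamTensorId (c • A) = c • lamTensorId A := by
  ext ⟨i, k⟩ ⟨j, l⟩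
  fin_cases i <;> fin_cases j <;> simp [lamTensorId, choiMap] <;> ring

/-- `Λ ⊗ id` after conjugation by `U ⊗ I`, as a linear map. -/
def lamL : Matrix (Fin 3 × Fin 4) (Fin 3 × Fin 4) ℂ →ₗ[ℂ]
    Matrix (Fin 3 × Fin 4) (Fin 3 × Fin 4) ℂ where
  toFun M := lamTensorId ((U ⊗ₖ (1 : Matrix (Fin 4) (Fin 4) ℂ)) * M *
        (U ⊗ₖ (1 : Matrix (Fin 4) (Fin 4) ℂ)).conjTranspose)
  map_add' A B := by
    rw [mul_add, add_mul, lam_add]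
  map_smul' c A := by
    rw [Matrix.mul_smul, Matrix.smul_mul, lam_smul]
    rfl

lemma lam_kron (σ : Matrix (Fin 3) (Fin 3) ℂ) (τ : Matrix (Fin 4) (Fin 4) ℂ) :
    lamL (σ ⊗ₖ τ) = choiMap (U * σ * U.conjTranspose) ⊗ₖ τ := by
  change lamTensorId _ = _
  rw [Matrix.conjTranspose_kronecker, ← Matrix.mul_kronecker_mul, ← Matrix.mul_kronecker_mul,
    Matrix.conjTranspose_one, one_mul, mul_one]
  generalize U * σ * U.conjTranspose = A
  ext ⟨i, k⟩ ⟨j, l⟩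
  fin_cases i <;> fin_cases j <;> simp [lamTensorId, choiMap] <;> ring

lemma sep_pos (M : Matrix (Fin 3 × Fin 4) (Fin 3 × Fin 4) ℂ) (h : Separable M) :
    (lamL M).PosSemidef := by
  obtain ⟨N, w, σ, τ, hw, -, hσ, hτ, rfl⟩ := h
  rw [map_sum]
  refine Matrix.posSemidef_sum _ fun i _ => ?_
  rw [map_smul, lam_kron]
  exact (((choi_pos _ ((hσ i).1.mul_mul_conjTranspose_same U)).kronecker (hτ i).1)).smul
    (by exact_mod_cast hw i)

/-! ### The witness vector, computed over `ℤ[√3]` -/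

/-- Integer versions of the vectors `φ_i`. -/
def ketI {n : ℕ} (k : Fin n) : Fin n → ℤ := fun j => if j = k then 1 else 0
def difI {n : ℕ} (a b : Fin n) : Fin n → ℤ :=
  fun j => if j = a then 1 else if j = b then -1 else 0

def vI (i : Fin 6) (a : Fin 3) (b c : Fin 2) : ℤ :=
  match i with
  | 0 => difI 0 1 a * ketI 0 b * ketI 0 c
  | 1 => difI 2 0 a * ketI 1 b * ketI 0 c
  | 2 => ketI 1 a * ketI 1 b * difI 0 1 c
  | 3 => difI 1 2 a * ketI 0 b * ketI 1 c
  | 4 => ketI 0 a * difI 0 1 b * ketI 1 c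
  | 5 => 1

def cI (i : Fin 6) : ℤ := if i = 5 then 1 else 6

def vJ (i : Fin 6) (p : Fin 3 × Fin 4) : ℤ := vI i p.1 (split4 p.2).1 (split4 p.2).2

def rI (p q : Fin 3 × Fin 4) : ℤ :=
  (if p = q then 12 else 0) - ∑ i, cI i * (vJ i p * vJ i q)

lemma ket_cast {n : ℕ} (k j : Fin n) : ket k j = (ketI k j : ℂ) := by
  simp [ket, ketI]

lemma dif_cast {n : ℕ} (a b j : Fin n) : dif a b j = (difI a b j : ℂ) := by
  unfold dif difI; split_ifs <;> simp

lemma phi_mul (i : Fin 6) (p q : Fin 3 × Fin 4) :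
    phi' i p * star (phi' i q) = (12 : ℂ)⁻¹ * ((cI i * (vJ i p * vJ i q) : ℤ) : ℂ) := by
  have h2 : ((Real.sqrt 2 : ℂ))⁻¹ * ((Real.sqrt 2 : ℂ))⁻¹ = 2⁻¹ := by
    rw [← mul_inv, ← Complex.ofReal_mul, Real.mul_self_sqrt (by norm_num)]; norm_num
  have h12 : ((Real.sqrt 12 : ℂ))⁻¹ * ((Real.sqrt 12 : ℂ))⁻¹ = 12⁻¹ := by
    rw [← mul_inv, ← Complex.ofReal_mul, Real.mul_self_sqrt (by norm_num)]; norm_num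
  have hc : (12 : ℂ)⁻¹ * 6 = 2⁻¹ := by norm_num
  unfold phi' vJ
  fin_cases i <;>
    simp only [phi, vI, tp, Pi.smul_apply, smul_eq_mul, ket_cast, dif_cast, star_mul', star_inv₀,
      Complex.star_def, Complex.conj_ofReal, map_intCast, map_one, Int.cast_mul, cI, Fin.reduceEq,
      Fin.zero_eta, Fin.mk_one, Fin.reduceFinMk, if_true, if_false, Int.cast_one, Int.cast_ofNat]
  · linear_combination (h2 - hc) *
      ((difI 0 1 p.1 : ℂ) * ketI 0 (split4 p.2).1 * ketI 0 (split4 p.2).2) *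
      ((difI 0 1 q.1 : ℂ) * ketI 0 (split4 q.2).1 * ketI 0 (split4 q.2).2)
  · linear_combination (h2 - hc) *
      ((difI 2 0 p.1 : ℂ) * ketI 1 (split4 p.2).1 * ketI 0 (split4 p.2).2) *
      ((difI 2 0 q.1 : ℂ) * ketI 1 (split4 q.2).1 * ketI 0 (split4 q.2).2)
  · linear_combination (h2 - hc) *
      ((ketI 1 p.1 : ℂ) * ketI 1 (split4 p.2).1 * difI 0 1 (split4 p.2).2) *
      ((ketI 1 q.1 : ℂ) * ketI 1 (split4 q.2).1 * difI 0 1 (split4 q.2).2)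
  · linear_combination (h2 - hc) *
      ((difI 1 2 p.1 : ℂ) * ketI 0 (split4 p.2).1 * ketI 1 (split4 p.2).2) *
      ((difI 1 2 q.1 : ℂ) * ketI 0 (split4 q.2).1 * ketI 1 (split4 q.2).2)
  · linear_combination (h2 - hc) *
      ((ketI 0 p.1 : ℂ) * difI 0 1 (split4 p.2).1 * ketI 1 (split4 p.2).2) *
      ((ketI 0 q.1 : ℂ) * difI 0 1 (split4 q.2).1 * ketI 1 (split4 q.2).2)
  · linear_combination h12

lemma rho_cast (p q : Fin 3 × Fin 4) : rho p q = (72 : ℂ)⁻¹ * (rI p q : ℂ) := by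
  have : ∑ i, phi' i p * star (phi' i q) =
      (12 : ℂ)⁻¹ * ((∑ i, cI i * (vJ i p * vJ i q) : ℤ) : ℂ) := by
    rw [Int.cast_sum, Finset.mul_sum]
    exact Finset.sum_congr rfl fun i _ => phi_mul i p q
  simp only [rho, Matrix.smul_apply, Matrix.sub_apply, Matrix.sum_apply, Matrix.vecMulVec_apply,
    Pi.star_apply, smul_eq_mul, this, rI, Matrix.one_apply]
  split_ifs <;> push_cast <;> ring

/-- The embedding `ℤ[√3] → ℝ`. -/
def emb : ℤ√3 →+* ℝ :=
  Zsqrtd.lift ⟨Real.sqrt 3, by rw [Real.mul_self_sqrt (by norm_num)]; norm_num⟩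

lemma emb_apply (z : ℤ√3) : emb z = z.re + z.im * Real.sqrt 3 := rfl

/-- `2 U`. -/
def UI : Fin 3 → Fin 3 → ℤ√3 :=
  ![![⟨1, 0⟩, ⟨0, 1⟩, ⟨0, 0⟩], ![⟨0, -1⟩, ⟨1, 0⟩, ⟨0, 0⟩], ![⟨0, 0⟩, ⟨0, 0⟩, ⟨2, 0⟩]]

lemma U_cast (a b : Fin 3) : U a b = (2 : ℂ)⁻¹ * ((emb (UI a b) : ℝ) : ℂ) := by
  fin_cases a <;> fin_cases b <;> simp [U, UI, emb_apply] <;> ring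

def MI (p q : Fin 3 × Fin 4) : ℤ√3 :=
  ∑ c, ∑ d, UI p.1 c * ((rI (c, p.2) (d, q.2) : ℤ) : ℤ√3) * UI q.1 d

lemma M_cast (p q : Fin 3 × Fin 4) :
    ((U ⊗ₖ (1 : Matrix (Fin 4) (Fin 4) ℂ)) * rho *
        (U ⊗ₖ (1 : Matrix (Fin 4) (Fin 4) ℂ)).conjTranspose) p q =
      (288 : ℂ)⁻¹ * ((emb (MI p q) : ℝ) : ℂ) := by
  have : ((U ⊗ₖ (1 : Matrix (Fin 4) (Fin 4) ℂ)) * rho *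
        (U ⊗ₖ (1 : Matrix (Fin 4) (Fin 4) ℂ)).conjTranspose) p q =
      ∑ c, ∑ d, U p.1 c * rho (c, p.2) (d, q.2) * star (U q.1 d) := by
    simp only [Matrix.mul_apply, Fintype.sum_prod_type, Matrix.conjTranspose_apply,
      Matrix.kroneckerMap_apply, Matrix.one_apply]
    simp only [mul_ite, mul_one, mul_zero, ite_mul, zero_mul, Finset.sum_ite_eq,
      Finset.mem_univ, if_true, apply_ite star, star_zero, Finset.sum_mul]
    rw [Finset.sum_comm]
  rw [this, MI]
  simp only [map_sum, map_mul, map_intCast, Complex.ofReal_sum, Finset.mul_sum]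
  refine Finset.sum_congr rfl fun c _ => Finset.sum_congr rfl fun d _ => ?_
  rw [U_cast, U_cast, rho_cast]
  simp
  ring

def choiI (A : Fin 3 → Fin 3 → ℤ√3) (i j : Fin 3) : ℤ√3 :=
  if i = j then A i i + A (i + 1) (i + 1) else - A i j

lemma choi_cast (A : Fin 3 → Fin 3 → ℤ√3) (B : Matrix (Fin 3) (Fin 3) ℂ)
    (h : ∀ i j, B i j = (288 : ℂ)⁻¹ * ((emb (A i j) : ℝ) : ℂ)) (i j : Fin 3) :
    choiMap B i j = (576 : ℂ)⁻¹ * ((emb (choiI A i j) : ℝ) : ℂ) := by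
  fin_cases i <;> fin_cases j <;> simp [choiMap, choiI, h] <;> ring

def yI (p : Fin 3 × Fin 4) : ℤ :=
  (![![-3, 6, 4, -10], ![1, 5, -5, -1], ![3, 9, 8, 1]] : Fin 3 → Fin 4 → ℤ) p.1 p.2

def SI : ℤ√3 := ∑ p, ∑ q, (yI p : ℤ√3) *
  (choiI (fun a b => MI (a, p.2) (b, q.2)) p.1 q.1 * (yI q : ℤ√3))

set_option maxRecDepth 100000 in
lemma SI_eq : SI = ⟨7656, -4518⟩ := by
  decide +kernel

lemma lam_cast (p q : Fin 3 × Fin 4) :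
    lamTensorId ((U ⊗ₖ (1 : Matrix (Fin 4) (Fin 4) ℂ)) * rho *
        (U ⊗ₖ (1 : Matrix (Fin 4) (Fin 4) ℂ)).conjTranspose) p q =
      (576 : ℂ)⁻¹ * ((emb (choiI (fun a b => MI (a, p.2) (b, q.2)) p.1 q.1) : ℝ) : ℂ) := by
  refine choi_cast (fun a b => MI (a, p.2) (b, q.2)) _ (fun i j => ?_) p.1 q.1
  rw [Matrix.of_apply]
  exact M_cast (i, p.2) (j, q.2)

lemma not_pos : ¬ (lamTensorId ((U ⊗ₖ (1 : Matrix (Fin 4) (Fin 4) ℂ)) * rho *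
        (U ⊗ₖ (1 : Matrix (Fin 4) (Fin 4) ℂ)).conjTranspose)).PosSemidef := by
  intro h
  have h1 := h.dotProduct_mulVec_nonneg (fun p => (yI p : ℂ))
  have h2 : star (fun p => (yI p : ℂ)) ⬝ᵥ
      (lamTensorId ((U ⊗ₖ (1 : Matrix (Fin 4) (Fin 4) ℂ)) * rho *
        (U ⊗ₖ (1 : Matrix (Fin 4) (Fin 4) ℂ)).conjTranspose)).mulVec (fun p => (yI p : ℂ)) =
      (((576 : ℝ)⁻¹ * emb SI : ℝ) : ℂ) := by
    simp only [dotProduct, Matrix.mulVec, SI, map_sum, map_mul, map_intCast, Complex.ofReal_mul,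
      Complex.ofReal_sum, Finset.mul_sum, Pi.star_apply]
    refine Finset.sum_congr rfl fun p _ => Finset.sum_congr rfl fun q _ => ?_
    rw [lam_cast]
    simp
    ring
  rw [h2, Complex.zero_le_real, SI_eq, emb_apply] at h1
  have h3 : (1.7 : ℝ) < Real.sqrt 3 := Real.lt_sqrt_of_sq_lt (by norm_num)
  norm_num at h1
  linarith

/-- `(Λ ⊗ id)((U ⊗ I) ρ (U ⊗ I)*)` is not positive semidefinite; consequently
`ρ` is not separable across the `ℂ^3 | ℂ^4` cut. -/
theorem stmt11 :
    ¬ (lamTensorId ((U ⊗ₖ (1 : Matrix (Fin 4) (Fin 4) ℂ)) * rho *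
        (U ⊗ₖ (1 : Matrix (Fin 4) (Fin 4) ℂ)).conjTranspose)).PosSemidef ∧
    ¬ Separable rho := by
  exact ⟨not_pos, fun h => not_pos (sep_pos rho h)⟩

end
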